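/- For general points, if 3d ≥ 15n + 1 and n ≥ 1, then ℓ(L(d, d−2, 6^n)) = 3d − 15n − 1. Since v(L(d, d−2, 6^n)) = 3d − 21n − 1, this system is special. -/

import Mathlib

/-!
Every curve of `L(d, d-2, mⁿ)` meets the line through `p₀` and `pᵢ` with multiplicity at least
`d + (m - 2)`, so each of the `n` lines splits off `k = m - 2` times and what remains is the system
`L(c+2, c, 2ⁿ)` with `c = d - 2 - kn`. Adding the lines back to this system and counting conditions
gives the lower bound `3d - 3(k+1)n` for the vector space dimension at every configuration.

For the upper bound it is enough, by semicontinuity, to find one configuration attaining it. Put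
`p₀ = (0 : 0 : 1)` and the other points on the curve `z = q(t)`, over the roots of a polynomial
`G = q s - 1`. Dehomogenized, the forms are polynomials in `z` of degree at most `2` over `ℂ[t]`,
and the ideal of the `n` points is generated by `u = z - q` and `w = s z - 1`, because
`w - s u = G`. Hence a form of the system is `Gᵏ (a u² + b u w + c w²)` with `a, b, c ∈ ℂ[t]`, and
the degree of the form bounds those of `a, b, c`. For `q = t ^ ⌈n/2⌉` and `s = t ^ ⌊n/2⌋`, over the
`n`-th roots of unity, these bounds leave exactly `3d - 3(k+1)n` free coefficients.
-/

open MvPolynomial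

/-- The iterated partial derivative corresponding to the multi-index `ν`. -/
noncomputable def mderiv (ν : Fin 3 → ℕ) :
    MvPolynomial (Fin 3) ℂ →ₗ[ℂ] MvPolynomial (Fin 3) ℂ :=
  ((pderiv (R := ℂ) (0 : Fin 3)).toLinearMap ^ ν 0) ∘ₗ
  ((pderiv (R := ℂ) (1 : Fin 3)).toLinearMap ^ ν 1) ∘ₗ
  ((pderiv (R := ℂ) (2 : Fin 3)).toLinearMap ^ ν 2)

/-- The linear system `L(d; m)` of homogeneous forms of degree `d` in three variables
all of whose partial derivatives of order `< m i` vanish at the point `p i`,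
i.e. plane curves of degree `d` with multiplicity at least `m i` at `p i`. -/
noncomputable def linSys {k : ℕ} (p : Fin k → Fin 3 → ℂ) (d : ℕ) (m : Fin k → ℕ) :
    Submodule ℂ (MvPolynomial (Fin 3) ℂ) :=
  (homogeneousSubmodule (Fin 3) ℂ d) ⊓
    ⨅ (i : Fin k), ⨅ (ν : Fin 3 → ℕ), ⨅ (_ : ν 0 + ν 1 + ν 2 < m i),
      LinearMap.ker ((aeval (p i)).toLinearMap ∘ₗ mderiv ν)

/-- The projective dimension `ℓ` of the linear system (`-1` means empty). -/
noncomputable def projDim {k : ℕ} (p : Fin k → Fin 3 → ℂ) (d : ℕ) (m : Fin k → ℕ) : ℤ :=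
  (Module.finrank ℂ (linSys p d m) : ℤ) - 1

/-- The virtual dimension `v = d(d+3)/2 - ∑ mᵢ(mᵢ+1)/2`. -/
def virtDim {k : ℕ} (d : ℕ) (m : Fin k → ℕ) : ℤ :=
  ((d : ℤ) * (d + 3)) / 2 - ∑ i : Fin k, ((m i : ℤ) * (m i + 1)) / 2

/-- The quasi-homogeneous multiplicity vector `(m₀, 6, …, 6)` on `n + 1` points. -/
def qh (n m0 : ℕ) : Fin (n + 1) → ℕ := fun i => if i = 0 then m0 else 6

/-- A property `Q` of configurations of `k` points of `ℙ²` (given by nonzero homogeneous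
coordinate vectors) holds for points in general position: there is a nonzero polynomial
in the coordinates such that `Q` holds whenever it does not vanish. -/
def Generically (k : ℕ) (Q : (Fin k → Fin 3 → ℂ) → Prop) : Prop :=
  ∃ P : MvPolynomial (Fin k × Fin 3) ℂ, P ≠ 0 ∧
    ∀ p : Fin k → Fin 3 → ℂ, (∀ i, p i ≠ 0) →
      eval (fun x => p x.1 x.2) P ≠ 0 → Q p

open scoped Polynomial

section Vanishing

variable {σ R : Type*} [CommSemiring R] {p : σ → R}

/-- The polynomials vanishing to order at least `m` at `p`, that is, all of whose partial
derivatives of order `< m` vanish at `p`. The recursion on `m` avoids multi-indices. -/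
noncomputable def vanishing (p : σ → R) : ℕ → Submodule R (MvPolynomial σ R)
  | 0 => ⊤
  | m + 1 => LinearMap.ker (aeval p).toLinearMap ⊓
      ⨅ i, (vanishing p m).comap (pderiv i).toLinearMap

lemma mem_vanishing_zero (F : MvPolynomial σ R) : F ∈ vanishing p 0 :=
  Submodule.mem_top

lemma mem_vanishing_succ {m : ℕ} {F : MvPolynomial σ R} :
    F ∈ vanishing p (m + 1) ↔ eval p F = 0 ∧ ∀ i, pderiv i F ∈ vanishing p m := by
  simp [vanishing]

lemma mem_vanishing_one {F : MvPolynomial σ R} : F ∈ vanishing p 1 ↔ eval p F = 0 := by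
  simp [mem_vanishing_succ, mem_vanishing_zero]

lemma eval_eq_zero_of_mem_vanishing {m : ℕ} (hm : m ≠ 0) {F : MvPolynomial σ R}
    (hF : F ∈ vanishing p m) : eval p F = 0 := by
  obtain ⟨m, rfl⟩ := Nat.exists_eq_succ_of_ne_zero hm
  exact (mem_vanishing_succ.1 hF).1

lemma pderiv_mem_vanishing {m : ℕ} {F : MvPolynomial σ R} (hF : F ∈ vanishing p m) (i : σ) :
    pderiv i F ∈ vanishing p (m - 1) := by
  cases m with
  | zero => exact mem_vanishing_zero _
  | succ m => exact (mem_vanishing_succ.1 hF).2 i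

lemma iterate_pderiv_mem_vanishing {m : ℕ} {F : MvPolynomial σ R} (hF : F ∈ vanishing p m)
    (i : σ) (k : ℕ) : (pderiv i)^[k] F ∈ vanishing p (m - k) := by
  induction k with
  | zero => exact hF
  | succ k ih =>
    rw [Function.iterate_succ_apply', ← Nat.sub_sub]
    exact pderiv_mem_vanishing ih i

lemma mul_mem_vanishing {a b : ℕ} {F G : MvPolynomial σ R} (hF : F ∈ vanishing p a)
    (hG : G ∈ vanishing p b) : F * G ∈ vanishing p (a + b) := by
  suffices h : ∀ c ≤ a + b, F * G ∈ vanishing p c from h _ le_rfl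
  intro c
  induction c generalizing a b F G with
  | zero => exact fun _ => mem_vanishing_zero _
  | succ c ih =>
    refine fun hc => mem_vanishing_succ.2 ⟨?_, fun i => ?_⟩
    · obtain ha | hb : a ≠ 0 ∨ b ≠ 0 := by omega
      · rw [map_mul, eval_eq_zero_of_mem_vanishing ha hF, zero_mul]
      · rw [map_mul, eval_eq_zero_of_mem_vanishing hb hG, mul_zero]
    · rw [pderiv_mul]
      exact add_mem (ih (pderiv_mem_vanishing hF i) hG (by omega))
        (ih hF (pderiv_mem_vanishing hG i) (by omega))

instance vanishing.gradedMonoid : SetLike.GradedMonoid (vanishing p) where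
  one_mem := mem_vanishing_zero 1
  mul_mem _ _ _ _ := mul_mem_vanishing

lemma pderiv_comm (i j : σ) (F : MvPolynomial σ R) :
    pderiv i (pderiv j F) = pderiv j (pderiv i F) := by
  ext s
  simp only [coeff_pderiv, Finsupp.add_apply, add_right_comm s]
  rcases eq_or_ne i j with rfl | h
  · rfl
  · simp only [Finsupp.single_eq_of_ne h, Finsupp.single_eq_of_ne h.symm, add_zero]
    ring

lemma eq_single_degree_or_exists_ne_zero (s : σ →₀ ℕ) (i : σ) :
    s = Finsupp.single i s.degree ∨ ∃ j ≠ i, s j ≠ 0 := by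
  by_contra! h
  have hs : s.support ⊆ {i} := fun j hj =>
    Finset.mem_singleton.2 (by_contra fun hji => Finsupp.mem_support_iff.1 hj (h.2 j hji))
  obtain ⟨b, rfl⟩ := Finsupp.support_subset_singleton'.1 hs
  exact h.1 (by rw [Finsupp.degree_single])

lemma eval_single_one_of_isHomogeneous [Finite σ] [DecidableEq σ] {d : ℕ}
    {F : MvPolynomial σ R} (hF : F.IsHomogeneous d) (i : σ) :
    eval (Pi.single i 1) F = coeff (Finsupp.single i d) F := by
  have := Fintype.ofFinite σ
  rw [eval_eq', Finset.sum_eq_single (Finsupp.single i d)]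
  · rw [Finset.prod_eq_single i (fun j _ hj => by simp [hj]) (by simp)]
    simp
  · intro s hs hsd
    have hdeg : s.degree = d := not_imp_comm.1 hF.coeff_eq_zero (mem_support_iff.1 hs)
    obtain h | ⟨j, hji, hj⟩ := eq_single_degree_or_exists_ne_zero s i
    · exact absurd (hdeg ▸ h) hsd
    · rw [Finset.prod_eq_zero (Finset.mem_univ j) (by simp [hji, hj]), mul_zero]
  · intro h
    rw [notMem_support_iff.1 h, zero_mul]

variable [NoZeroDivisors R] [CharZero R]

lemma mem_vanishing_succ_of_pderiv_mem [Finite σ] {d m : ℕ} (hd : d ≠ 0) (hm : m ≠ 0)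
    {F : MvPolynomial σ R} (hF : F.IsHomogeneous d) (h : ∀ i, pderiv i F ∈ vanishing p m) :
    F ∈ vanishing p (m + 1) := by
  have := Fintype.ofFinite σ
  have euler := congrArg (eval p) hF.sum_X_mul_pderiv
  rw [map_sum, Finset.sum_eq_zero fun i _ => by
    rw [map_mul, eval_eq_zero_of_mem_vanishing hm (h i), mul_zero]] at euler
  exact mem_vanishing_succ.2 ⟨by simpa [hd] using euler.symm, h⟩

lemma coeff_eq_zero_of_mem_vanishing_single [Finite σ] [DecidableEq σ] {d m : ℕ} {i : σ}
    {F : MvPolynomial σ R} (hF : F.IsHomogeneous d) (hv : F ∈ vanishing (Pi.single i 1) m)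
    {s : σ →₀ ℕ} (hs : d < s i + m) : coeff s F = 0 := by
  by_contra hne
  have hsd : s.degree = d := not_imp_comm.1 hF.coeff_eq_zero hne
  induction m generalizing F d s with
  | zero =>
    have := Finsupp.le_degree i s
    omega
  | succ m ih =>
    obtain ⟨heval, hpderiv⟩ := mem_vanishing_succ.1 hv
    obtain h | ⟨j, hji, hj⟩ := eq_single_degree_or_exists_ne_zero s i
    · rw [h, hsd, ← eval_single_one_of_isHomogeneous hF, heval] at hne
      exact hne rfl
    · obtain ⟨t, rfl⟩ : ∃ t, s = t + Finsupp.single j 1 :=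
        ⟨s - Finsupp.single j 1, by rw [Finsupp.sub_single_one_add hj, add_tsub_cancel_right]⟩
      rw [map_add, Finsupp.degree_single] at hsd
      rw [Finsupp.add_apply, Finsupp.single_eq_of_ne hji.symm, add_zero] at hs
      refine ih hF.pderiv (hpderiv j) (s := t) (by omega) ?_ (by omega)
      rw [coeff_pderiv]
      exact mul_ne_zero hne (Nat.cast_add_one_ne_zero _)

end Vanishing

section LinearSystems

lemma mderiv_apply (ν : Fin 3 → ℕ) (F : MvPolynomial (Fin 3) ℂ) :
    mderiv ν F = (pderiv 0)^[ν 0] ((pderiv 1)^[ν 1] ((pderiv 2)^[ν 2] F)) := by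
  simp [mderiv, Module.End.pow_apply]

lemma mderiv_zero_apply (F : MvPolynomial (Fin 3) ℂ) : mderiv 0 F = F := by
  simp [mderiv_apply]

lemma mderiv_pderiv (ν : Fin 3 → ℕ) (i : Fin 3) (F : MvPolynomial (Fin 3) ℂ) :
    mderiv ν (pderiv i F) = mderiv (ν + Pi.single i 1) F := by
  have hcomm (j k : Fin 3) (a : ℕ) (G : MvPolynomial (Fin 3) ℂ) :
      (pderiv j)^[a] (pderiv k G) = pderiv k ((pderiv j)^[a] G) :=
    (Function.Commute.iterate_left (pderiv_comm j k) a) G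
  rw [mderiv_apply, mderiv_apply]
  fin_cases i <;> simp [Function.iterate_succ_apply', hcomm]

lemma order_add_single (ν : Fin 3 → ℕ) (i : Fin 3) :
    (ν + Pi.single i 1 : Fin 3 → ℕ) 0 + (ν + Pi.single i 1 : Fin 3 → ℕ) 1 +
      (ν + Pi.single i 1 : Fin 3 → ℕ) 2 = ν 0 + ν 1 + ν 2 + 1 := by
  fin_cases i <;> simp <;> ring

lemma mem_vanishing_iff_mderiv {p : Fin 3 → ℂ} {m : ℕ} {F : MvPolynomial (Fin 3) ℂ} :
    F ∈ vanishing p m ↔ ∀ ν : Fin 3 → ℕ, ν 0 + ν 1 + ν 2 < m → eval p (mderiv ν F) = 0 := by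
  constructor
  · intro hF ν hν
    rw [mderiv_apply]
    exact eval_eq_zero_of_mem_vanishing (by omega)
      (iterate_pderiv_mem_vanishing (iterate_pderiv_mem_vanishing
        (iterate_pderiv_mem_vanishing hF 2 _) 1 _) 0 _)
  · induction m generalizing F with
    | zero => exact fun _ => mem_vanishing_zero F
    | succ m ih =>
      refine fun h => mem_vanishing_succ.2
        ⟨by simpa only [mderiv_zero_apply] using h 0 (by simp), fun i => ih fun ν hν => ?_⟩
      rw [mderiv_pderiv]
      exact h _ (by rw [order_add_single]; omega)

lemma mem_linSys_iff {k : ℕ} {p : Fin k → Fin 3 → ℂ} {d : ℕ} {m : Fin k → ℕ}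
    {F : MvPolynomial (Fin 3) ℂ} :
    F ∈ linSys p d m ↔ F.IsHomogeneous d ∧ ∀ i, F ∈ vanishing (p i) (m i) := by
  simp [linSys, mem_vanishing_iff_mderiv]

lemma mem_vanishing_succ_of_isHomogeneous {p : Fin 3 → ℂ} {d m : ℕ} (hm : m ≤ d)
    {F : MvPolynomial (Fin 3) ℂ} (hF : F.IsHomogeneous d)
    (h : ∀ ν : Fin 3 → ℕ, ν 0 + ν 1 + ν 2 = m → eval p (mderiv ν F) = 0) :
    F ∈ vanishing p (m + 1) := by
  induction m generalizing d F with
  | zero =>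
    exact mem_vanishing_succ.2
      ⟨by simpa only [mderiv_zero_apply] using h 0 rfl, fun _ => mem_vanishing_zero _⟩
  | succ m ih =>
    refine mem_vanishing_succ_of_pderiv_mem (by omega) m.succ_ne_zero hF fun i =>
      ih (d := d - 1) (by omega) hF.pderiv fun ν hν => ?_
    rw [mderiv_pderiv]
    exact h _ (by rw [order_add_single, hν])

instance homogeneousSubmodule_finite (σ R : Type*) [Finite σ] [CommSemiring R] (d : ℕ) :
    Module.Finite R (homogeneousSubmodule σ R d) :=
  Module.Finite.iff_fg.2 (homogeneousSubmodule_fg σ R d)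

lemma card_finsupp_degree_eq (σ : Type*) [Fintype σ] (d : ℕ) :
    Nat.card {s : σ →₀ ℕ // s.degree = d} = (Fintype.card σ + d - 1).choose d := by
  classical
  rw [← Finset.card_univ, ← Finset.card_finsuppAntidiag_nat_eq_choose]
  refine Nat.subtype_card _ fun s => ?_
  simp [Finsupp.degree_eq_sum]

lemma finrank_homogeneousSubmodule (σ R : Type*) [Fintype σ] [CommRing R] [Nontrivial R]
    (d : ℕ) :
    Module.finrank R (homogeneousSubmodule σ R d) = (Fintype.card σ + d - 1).choose d := by
  rw [homogeneousSubmodule_eq_finsupp_supported]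
  exact (Module.finrank_eq_nat_card_basis
    (basisRestrictSupport R {s : σ →₀ ℕ | s.degree = d})).trans (card_finsupp_degree_eq σ d)

lemma card_multiindices_order_succ_eq (m : ℕ) :
    Nat.card {ν : Fin 3 → ℕ // ν 0 + ν 1 + ν 2 + 1 = m} = (m + 1).choose 2 := by
  cases m with
  | zero => simp
  | succ m =>
    have e : {ν : Fin 3 → ℕ // ν 0 + ν 1 + ν 2 + 1 = m + 1} ≃ {s : Fin 3 →₀ ℕ // s.degree = m} :=
      Finsupp.equivFunOnFinite.symm.subtypeEquiv fun ν => by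
        simp [Finsupp.degree_eq_sum, Fin.sum_univ_three]
    rw [Nat.card_congr e, card_finsupp_degree_eq, Fintype.card_fin,
      show 3 + m - 1 = m + 2 by omega, Nat.choose_symm_add]

lemma finite_multiindices_order_lt (m : ℕ) : {ν : Fin 3 → ℕ | ν 0 + ν 1 + ν 2 < m}.Finite :=
  (Set.finite_Iic fun _ => m).subset fun ν (hν : ν 0 + ν 1 + ν 2 < m) i => by
    fin_cases i <;> simp <;> omega

instance finite_linSys {k : ℕ} (p : Fin k → Fin 3 → ℂ) (d : ℕ) (m : Fin k → ℕ) :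
    Module.Finite ℂ (linSys p d m) :=
  Submodule.finiteDimensional_of_le (S₂ := homogeneousSubmodule (Fin 3) ℂ d) inf_le_left

lemma choose_le_finrank_linSys_add {k : ℕ} (p : Fin k → Fin 3 → ℂ) (d : ℕ) (m : Fin k → ℕ)
    (hm : ∀ i, m i ≤ d + 1) :
    (d + 2).choose 2 ≤ Module.finrank ℂ (linSys p d m) + ∑ i, (m i + 1).choose 2 := by
  let V := homogeneousSubmodule (Fin 3) ℂ d
  let J := Σ i, {ν : Fin 3 → ℕ // ν 0 + ν 1 + ν 2 + 1 = m i}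
  let T : V →ₗ[ℂ] (J → ℂ) :=
    LinearMap.pi fun x => (aeval (p x.1)).toLinearMap ∘ₗ mderiv x.2 ∘ₗ V.subtype
  have hker : (LinearMap.ker T).map V.subtype ≤ linSys p d m := by
    rintro _ ⟨F, hF, rfl⟩
    refine mem_linSys_iff.2 ⟨F.2, fun i => ?_⟩
    rcases hmi : m i with _ | j
    · exact mem_vanishing_zero _
    · refine mem_vanishing_succ_of_isHomogeneous (by have := hm i; omega) F.2 fun ν hν => ?_
      simpa [T] using congrFun (LinearMap.mem_ker.1 hF) ⟨i, ν, by omega⟩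
  have hfinrank_ker := Submodule.finrank_mono hker
  rw [Submodule.finrank_map_subtype_eq] at hfinrank_ker
  have hrank := T.finrank_range_add_finrank_ker
  have hrange : Module.finrank ℂ (LinearMap.range T) ≤ ∑ i, (m i + 1).choose 2 := by
    have (i : Fin k) : Finite {ν : Fin 3 → ℕ // ν 0 + ν 1 + ν 2 + 1 = m i} :=
      (finite_multiindices_order_lt (m i)).subset fun ν (hν : _ = m i) => Nat.lt_of_succ_le hν.le
    have := Fintype.ofFinite J
    refine (Submodule.finrank_le _).trans ?_
    rw [Module.finrank_fintype_fun_eq_card, ← Nat.card_eq_fintype_card, Nat.card_sigma]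
    simp only [card_multiindices_order_succ_eq, le_refl]
  have hV : Module.finrank ℂ V = (d + 2).choose 2 := by
    rw [finrank_homogeneousSubmodule, Fintype.card_fin, show 3 + d - 1 = d + 2 by omega,
      Nat.choose_symm_add]
  omega

lemma exists_linearForm_eval_eq_zero {ι σ K : Type*} [Fintype ι] [Fintype σ] [Field K]
    (h : Fintype.card ι < Fintype.card σ) (p : ι → σ → K) :
    ∃ L : MvPolynomial σ K, L ≠ 0 ∧ L.IsHomogeneous 1 ∧ ∀ i, eval (p i) L = 0 := by
  classical
  obtain ⟨a, ha, ha0⟩ := Submodule.exists_mem_ne_zero_of_ne_bot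
    (LinearMap.ker_ne_bot_of_finrank_lt (f := Matrix.mulVecLin (Matrix.of p)) (by simpa using h))
  have heval (x : σ → K) : eval x ((Matrix.of fun _ : Unit => a).toMvPolynomial ()) = a ⬝ᵥ x := by
    rw [Matrix.toMvPolynomial_eval_eq_apply]
    rfl
  refine ⟨(Matrix.of fun _ : Unit => a).toMvPolynomial (), fun h0 => ha0 ?_,
    Matrix.toMvPolynomial_isHomogeneous _ _, fun i => ?_⟩
  · ext j
    simpa [h0] using (heval (Pi.single j 1)).symm
  · rw [heval, dotProduct_comm]
    exact congrFun (LinearMap.mem_ker.1 ha) i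

/-- The quasi-homogeneous multiplicity vector `(m₀, m, …, m)` on `n + 1` points. -/
def quasiHom (n m₀ m : ℕ) : Fin (n + 1) → ℕ := fun i => if i = 0 then m₀ else m

lemma quasiHom_zero (n m₀ m : ℕ) : quasiHom n m₀ m 0 = m₀ := rfl

lemma quasiHom_succ (n m₀ m : ℕ) (i : Fin n) : quasiHom n m₀ m i.succ = m := rfl

lemma mul_prod_pow_mem_linSys {n : ℕ} {p : Fin (n + 1) → Fin 3 → ℂ}
    {L : Fin n → MvPolynomial (Fin 3) ℂ} (hL : ∀ i, (L i).IsHomogeneous 1)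
    (hL_zero : ∀ i, eval (p 0) (L i) = 0) (hL_succ : ∀ i, eval (p i.succ) (L i) = 0)
    {d m₀ m : ℕ} (k : ℕ) {F : MvPolynomial (Fin 3) ℂ} (hF : F ∈ linSys p d (quasiHom n m₀ m)) :
    F * (∏ i, L i) ^ k ∈ linSys p (d + n * k) (quasiHom n (m₀ + n * k) (m + k)) := by
  obtain ⟨hF, hFv⟩ := mem_linSys_iff.1 hF
  have hprod_zero : ∏ i, L i ∈ vanishing (p 0) n := by
    simpa using SetLike.prod_mem_graded (vanishing (p 0)) (fun _ => 1) L
      fun i (_ : i ∈ Finset.univ) => mem_vanishing_one.2 (hL_zero i)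
  have hprod_succ (i : Fin n) : ∏ j, L j ∈ vanishing (p i.succ) 1 := by
    rw [mem_vanishing_one, map_prod]
    exact Finset.prod_eq_zero (Finset.mem_univ i) (hL_succ i)
  refine mem_linSys_iff.2 ⟨hF.mul ?_, Fin.cases ?_ fun i => ?_⟩
  · simpa using (IsHomogeneous.prod Finset.univ L (fun _ => 1) fun i _ => hL i).pow k
  · rw [mul_comm n]
    exact mul_mem_vanishing (hFv 0) (SetLike.pow_mem_graded k hprod_zero)
  · simpa [quasiHom_succ] using
      mul_mem_vanishing (hFv i.succ) (SetLike.pow_mem_graded k (hprod_succ i))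

lemma finrank_linSys_quasiHom_le_add {n d m₀ m : ℕ} (p : Fin (n + 1) → Fin 3 → ℂ) (k : ℕ) :
    Module.finrank ℂ (linSys p d (quasiHom n m₀ m)) ≤
      Module.finrank ℂ (linSys p (d + n * k) (quasiHom n (m₀ + n * k) (m + k))) := by
  choose L hL0 hL hLp using fun i : Fin n =>
    exists_linearForm_eval_eq_zero (by simp) ![p 0, p i.succ]
  have hinj : Function.Injective (LinearMap.mulRight ℂ ((∏ i, L i) ^ k)) :=
    mul_left_injective₀ (pow_ne_zero _ (Finset.prod_ne_zero_iff.2 fun i _ => hL0 i))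
  rw [(Submodule.equivMapOfInjective _ hinj (linSys p d _)).finrank_eq]
  refine Submodule.finrank_mono (Submodule.map_le_iff_le_comap.2 fun F hF => ?_)
  exact mul_prod_pow_mem_linSys hL (fun i => hLp i 0) (fun i => hLp i 1) k hF

lemma le_finrank_linSys_quasiHom {d n k : ℕ} (hd : n * k + 2 ≤ d)
    (p : Fin (n + 1) → Fin 3 → ℂ) :
    3 * d - 3 * (k + 1) * n ≤
      Module.finrank ℂ (linSys p d (quasiHom n (d - 2) (k + 2))) := by
  obtain ⟨c, rfl⟩ := Nat.exists_eq_add_of_le' hd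
  have hcount := choose_le_finrank_linSys_add p (c + 2) (quasiHom n c 2)
    (Fin.cases (by rw [quasiHom_zero]; omega) fun i => by rw [quasiHom_succ]; omega)
  have hadd := finrank_linSys_quasiHom_le_add (d := c + 2) (m₀ := c) (m := 2) p k
  have hsum : ∑ i, (quasiHom n c 2 i + 1).choose 2 = (c + 1).choose 2 + n * 3 := by
    simp [Fin.sum_univ_succ, quasiHom_zero, quasiHom_succ]
  have hchoose : (c + 2 + 2).choose 2 = (c + 1).choose 2 + 3 * (c + 2) := by
    simp only [Nat.choose_succ_succ, Nat.choose_zero_right, Nat.choose_one_right]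
    ring
  rw [show c + 2 + n * k = c + (n * k + 2) by ring, show c + n * k = c + (n * k + 2) - 2 by omega,
    add_comm 2 k] at hadd
  have : 3 * (k + 1) * n = 3 * (n * k) + 3 * n := by ring
  omega

end LinearSystems

section Semicontinuity

lemma exists_eval_ne_zero_finrank_ker_le {K V τ J : Type*} [Field K] [AddCommGroup V]
    [Module K V] [FiniteDimensional K V] [Finite J] (T : (τ → K) → V →ₗ[K] J → K)
    (hT : ∀ v j, ∃ P : MvPolynomial τ K, ∀ x, eval x P = T x v j) (x₀ : τ → K) :
    ∃ P : MvPolynomial τ K, eval x₀ P ≠ 0 ∧ ∀ x, eval x P ≠ 0 →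
      Module.finrank K (LinearMap.ker (T x)) ≤ Module.finrank K (LinearMap.ker (T x₀)) := by
  classical
  have := Fintype.ofFinite J
  choose A hA using hT
  let b := Module.finBasis K (LinearMap.range (T x₀))
  choose v hv using fun i => (b i).2
  obtain ⟨φ, hφ⟩ := LinearMap.exists_extend b.equivFun.toLinearMap
  let M (x : τ → K) := Matrix.of fun i j => φ (T x (v j)) i
  have hM₀ : M x₀ = 1 := by
    ext i j
    have hφb : φ (b j) = b.equivFun (b j) := LinearMap.congr_fun hφ (b j)
    simp [M, hv, hφb, Matrix.one_apply, eq_comm]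
  let P := (Matrix.of fun i j => ∑ l, C (φ (fun l' => if l = l' then 1 else 0) i) * A (v j) l).det
  have hP (x : τ → K) : eval x P = (M x).det := by
    rw [RingHom.map_det]
    congr 1
    ext i j
    simp [M, LinearMap.pi_apply_eq_sum_univ φ (T x (v j)), hA, mul_comm]
  refine ⟨P, by simp [hP, hM₀], fun x hx => ?_⟩
  rw [hP] at hx
  have hli : LinearIndependent K fun j => (T x).rangeRestrict (v j) :=
    .of_comp (φ ∘ₗ Submodule.subtype _) (Matrix.linearIndependent_cols_of_det_ne_zero hx)
  have hrank := hli.fintype_card_le_finrank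
  rw [Fintype.card_fin] at hrank
  have := (T x).finrank_range_add_finrank_ker
  have := (T x₀).finrank_range_add_finrank_ker
  omega

lemma Generically.mono {k : ℕ} {Q Q' : (Fin k → Fin 3 → ℂ) → Prop} (hQ : Generically k Q)
    (h : ∀ p, Q p → Q' p) : Generically k Q' := by
  obtain ⟨P, hP0, hP⟩ := hQ
  exact ⟨P, hP0, fun p hp hpP => h p (hP p hp hpP)⟩

lemma generically_finrank_linSys_le {k : ℕ} (d : ℕ) (m : Fin k → ℕ) (q : Fin k → Fin 3 → ℂ) :
    Generically k fun p =>
      Module.finrank ℂ (linSys p d m) ≤ Module.finrank ℂ (linSys q d m) := by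
  let V := homogeneousSubmodule (Fin 3) ℂ d
  let J := Σ i, {ν : Fin 3 → ℕ // ν 0 + ν 1 + ν 2 < m i}
  let T (x : Fin k × Fin 3 → ℂ) : V →ₗ[ℂ] (J → ℂ) := LinearMap.pi fun a =>
    (aeval fun s => x (a.1, s)).toLinearMap ∘ₗ mderiv a.2 ∘ₗ V.subtype
  have hker (p : Fin k → Fin 3 → ℂ) :
      Module.finrank ℂ (LinearMap.ker (T fun x => p x.1 x.2)) =
        Module.finrank ℂ (linSys p d m) := by
    have hmap : (LinearMap.ker (T fun x => p x.1 x.2)).map V.subtype = linSys p d m := by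
      ext F
      simp [T, J, V, mem_linSys_iff, mem_vanishing_iff_mderiv, funext_iff, and_comm, Sigma.forall]
    rw [← hmap, Submodule.finrank_map_subtype_eq]
  have (i : Fin k) : Finite {ν : Fin 3 → ℕ // ν 0 + ν 1 + ν 2 < m i} :=
    finite_multiindices_order_lt (m i)
  obtain ⟨P, hPq, hP⟩ := exists_eval_ne_zero_finrank_ker_le T
    (fun F a => ⟨rename (fun s => (a.1, s)) (mderiv a.2 F), fun x => by
      simp [T, eval_rename, Function.comp_def]⟩) (fun x => q x.1 x.2)
  refine ⟨P, fun h => hPq (by rw [h, map_zero]), fun p _ hp => ?_⟩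
  simpa only [hker] using hP _ hp

end Semicontinuity

section SubstitutionInVanishing

lemma derivative_aeval {σ R : Type*} [Fintype σ] [CommSemiring R] (γ : σ → R[X])
    (F : MvPolynomial σ R) :
    Polynomial.derivative (aeval γ F) =
      ∑ i, aeval γ (pderiv i F) * Polynomial.derivative (γ i) := by
  classical
  induction F using MvPolynomial.induction_on with
  | C a => simp
  | add F G hF hG => simp only [map_add, hF, hG, add_mul, Finset.sum_add_distrib]
  | mul_X F i hF =>
    simp only [map_mul, aeval_X, Polynomial.derivative_mul, hF, pderiv_mul, pderiv_X, map_add,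
      add_mul, Finset.sum_add_distrib, Finset.sum_mul]
    congr 1
    · exact Finset.sum_congr rfl fun j _ => by ring
    · simp [Pi.single_apply, apply_ite]

lemma prod_X_sub_C_pow_dvd {ι K : Type*} [Fintype ι] [Field K] {t : ι → K}
    (ht : Function.Injective t) {k : ℕ} {f : K[X]}
    (h : ∀ i, (Polynomial.X - Polynomial.C (t i)) ^ k ∣ f) :
    (∏ i, (Polynomial.X - Polynomial.C (t i))) ^ k ∣ f := by
  rw [← Finset.prod_pow]
  exact Finset.prod_dvd_of_coprime
    (fun i _ j _ hij => (Polynomial.pairwise_coprime_X_sub_C ht hij).pow) fun i _ => h i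

variable {K : Type*} [Field K] [CharZero K]

lemma X_sub_C_pow_succ_dvd_of_derivative {t : K} {m : ℕ} {f : K[X]} (hf : f.eval t = 0)
    (h : (Polynomial.X - Polynomial.C t) ^ m ∣ Polynomial.derivative f) :
    (Polynomial.X - Polynomial.C t) ^ (m + 1) ∣ f := by
  rcases eq_or_ne f 0 with rfl | hf0
  · exact dvd_zero _
  rcases eq_or_ne (Polynomial.derivative f) 0 with hd | hd
  · rw [Polynomial.eq_C_of_derivative_eq_zero hd, Polynomial.eval_C] at hf
    rw [Polynomial.eq_C_of_derivative_eq_zero hd, hf, Polynomial.C_0] at hf0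
    exact absurd rfl hf0
  · have hpos := (Polynomial.rootMultiplicity_pos hf0).2 hf
    have hle := (Polynomial.le_rootMultiplicity_iff hd).2 h
    rw [Polynomial.derivative_rootMultiplicity_of_root hf] at hle
    exact (Polynomial.le_rootMultiplicity_iff hf0).1 (by omega)

lemma X_sub_C_pow_dvd_aeval_of_mem_vanishing {σ : Type*} [Finite σ] {t : K} {γ : σ → K[X]}
    {m : ℕ} {F : MvPolynomial σ K} (hF : F ∈ vanishing (fun i => (γ i).eval t) m) :
    (Polynomial.X - Polynomial.C t) ^ m ∣ aeval γ F := by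
  have := Fintype.ofFinite σ
  induction m generalizing F with
  | zero => simp
  | succ m ih =>
    obtain ⟨heval, hpderiv⟩ := mem_vanishing_succ.1 hF
    refine X_sub_C_pow_succ_dvd_of_derivative ?_ ?_
    · rw [← heval, ← coe_aeval_eq_eval, ← Polynomial.coe_aeval_eq_eval]
      exact comp_aeval_apply γ (Polynomial.aeval t) F
    · rw [derivative_aeval]
      exact Finset.dvd_sum fun i _ => (ih (hpderiv i)).mul_right _

lemma dvd_coeff_taylor_of_dvd_eval_iterate_derivative {D q : K[X]} {f : K[X][X]} {j : ℕ}
    (h : D ∣ (Polynomial.derivative^[j] f).eval q) : D ∣ (Polynomial.taylor q f).coeff j := by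
  have hunit : IsUnit ((j.factorial : K[X])) := by
    rw [← map_natCast Polynomial.C]
    exact Polynomial.isUnit_C.2 (Nat.cast_ne_zero.2 j.factorial_ne_zero).isUnit
  rw [← Polynomial.factorial_smul_hasseDeriv, LinearMap.smul_apply, Polynomial.eval_smul,
    nsmul_eq_mul, hunit.dvd_mul_left] at h
  rwa [Polynomial.taylor_coeff]

end SubstitutionInVanishing

section QuadraticForms

/-- The quadratic form `a u² + b u w + c w²` in `u = X - q` and `w = s X - 1`, as a linear
function of its coefficients `(a, b, c)`. -/
noncomputable def quadraticForm {R : Type*} [CommRing R] (q s : R) : R × R × R →ₗ[R] R[X] :=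
  (LinearMap.toSpanSingleton R R[X] ((Polynomial.X - Polynomial.C q) ^ 2)).coprod
    ((LinearMap.toSpanSingleton R R[X]
      ((Polynomial.X - Polynomial.C q) * (Polynomial.C s * Polynomial.X - 1))).coprod
    (LinearMap.toSpanSingleton R R[X] ((Polynomial.C s * Polynomial.X - 1) ^ 2)))

section CommRing

variable {R : Type*} [CommRing R]

lemma quadraticForm_apply (q s a b c : R) :
    quadraticForm q s (a, b, c) =
      Polynomial.C a * (Polynomial.X - Polynomial.C q) ^ 2 +
        (Polynomial.C b * ((Polynomial.X - Polynomial.C q) * (Polynomial.C s * Polynomial.X - 1)) +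
        Polynomial.C c * (Polynomial.C s * Polynomial.X - 1) ^ 2) := by
  simp [quadraticForm, Polynomial.smul_eq_C_mul]

lemma quadraticForm_eq_quadratic (q s a b c : R) :
    quadraticForm q s (a, b, c) =
      Polynomial.C (a + b * s + c * s ^ 2) * Polynomial.X ^ 2 +
        Polynomial.C (-(2 * a * q) - b * (1 + q * s) - 2 * c * s) * Polynomial.X +
        Polynomial.C (a * q ^ 2 + b * q + c) := by
  simp only [quadraticForm_apply, map_add, map_sub, map_neg, map_mul, map_pow, map_one, map_ofNat]
  ring

lemma coeff_quadraticForm (q s a b c : R) :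
    (quadraticForm q s (a, b, c)).coeff 2 = a + b * s + c * s ^ 2 ∧
      (quadraticForm q s (a, b, c)).coeff 1 = -(2 * a * q) - b * (1 + q * s) - 2 * c * s ∧
      (quadraticForm q s (a, b, c)).coeff 0 = a * q ^ 2 + b * q + c := by
  rw [quadraticForm_eq_quadratic]
  refine ⟨?_, ?_, ?_⟩ <;>
  simp [-map_add, -map_sub, -map_mul, Polynomial.coeff_X, Polynomial.coeff_C]

lemma exists_eq_smul_quadraticForm {f : R[X]} {q s G : R} {k : ℕ}
    (hqs : q * s = G + 1) (hf : f.natDegree ≤ 2)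
    (h : ∀ j ≤ 2, G ^ (k + 2 - j) ∣ (Polynomial.taylor q f).coeff j) :
    ∃ v, f = G ^ k • quadraticForm q s v := by
  obtain ⟨c₀, hc₀⟩ := h 0 (by norm_num)
  obtain ⟨c₁, hc₁⟩ := h 1 (by norm_num)
  obtain ⟨c₂, hc₂⟩ := h 2 (by norm_num)
  have htaylor : f = Polynomial.C (G ^ k) * (Polynomial.C c₂ * (Polynomial.X - Polynomial.C q) ^ 2 +
      Polynomial.C (G * c₁) * (Polynomial.X - Polynomial.C q) + Polynomial.C (G ^ 2 * c₀)) := by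
    rw [← Polynomial.natDegree_taylor f q] at hf
    conv_lhs => rw [← Polynomial.sum_taylor_eq f q]
    rw [Polynomial.sum_over_range' _ (by simp) 3 (by omega)]
    simp only [Finset.sum_range_succ, Finset.range_one, Finset.sum_singleton, hc₀, hc₁, hc₂,
      tsub_zero, map_mul, map_pow, pow_zero, mul_one, Nat.add_one_sub_one, pow_one,
      add_tsub_cancel_right]
    ring
  have hG : Polynomial.C G = Polynomial.C s * Polynomial.X - 1 -
      Polynomial.C s * (Polynomial.X - Polynomial.C q) := by
    have := congrArg Polynomial.C hqs
    simp only [map_mul, map_add, map_one] at this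
    linear_combination -this
  refine ⟨(c₂ - c₁ * s + c₀ * s ^ 2, c₁ - 2 * s * c₀, c₀), ?_⟩
  rw [htaylor, quadraticForm_apply, Polynomial.smul_eq_C_mul]
  simp only [map_add, map_sub, map_mul, map_pow, hG, map_ofNat]
  ring

-- `G X = q w - u` and `G = w - s u`, so `G² (A X² + B X + D)` is a quadratic form in `u` and `w`.
lemma mul_sq_eq_of_eq_quadraticForm {f : R[X]} {q s G a b c : R} (hqs : q * s = G + 1)
    (hf : f = quadraticForm q s (a, b, c)) :
    a * G ^ 2 = f.coeff 2 + f.coeff 1 * s + f.coeff 0 * s ^ 2 ∧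
      b * G ^ 2 = -(2 * f.coeff 2 * q + f.coeff 1 * (1 + q * s) + 2 * f.coeff 0 * s) ∧
      c * G ^ 2 = f.coeff 2 * q ^ 2 + f.coeff 1 * q + f.coeff 0 := by
  obtain ⟨h₂, h₁, h₀⟩ := coeff_quadraticForm q s a b c
  rw [hf, h₂, h₁, h₀, eq_sub_of_add_eq hqs.symm]
  refine ⟨?_, ?_, ?_⟩ <;> ring

end CommRing

variable {K : Type*} [Field K]

lemma mem_degreeLT_of_natDegree_mul_le {f g : K[X]} {k N : ℕ} (hg : g ≠ 0)
    (h : (f * g).natDegree ≤ N) (hN : N < k + g.natDegree) : f ∈ Polynomial.degreeLT K k := by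
  rcases eq_or_ne f 0 with rfl | hf
  · exact zero_mem _
  · rw [Polynomial.natDegree_mul hf hg] at h
    rw [Polynomial.mem_degreeLT, ← Polynomial.natDegree_lt_iff_degree_lt hf]
    omega

lemma finrank_degreeLT (k : ℕ) : Module.finrank K (Polynomial.degreeLT K k) = k := by
  rw [(Polynomial.degreeLTEquiv K k).finrank_eq, Module.finrank_fin_fun]

instance finite_degreeLT (k : ℕ) : Module.Finite K (Polynomial.degreeLT K k) :=
  Module.Finite.equiv (Polynomial.degreeLTEquiv K k).symm

lemma mem_degreeLT_of_natDegree_coeff_quadraticForm_le {q s G a b c : K[X]} {N : ℕ}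
    (hqs : q * s = G + 1) (hq : 0 < q.natDegree) (hs : s ≠ 0)
    (h : ∀ j ≤ 2, ((quadraticForm q s (a, b, c)).coeff j).natDegree ≤ N + 2 - j) :
    a ∈ Polynomial.degreeLT K (N + 3 - 2 * q.natDegree) ∧
      b ∈ Polynomial.degreeLT K (N + 2 - (q.natDegree + s.natDegree)) ∧
      c ∈ Polynomial.degreeLT K (N + 1 - 2 * s.natDegree) := by
  obtain ⟨ha, hb, hc⟩ := mul_sq_eq_of_eq_quadraticForm hqs (a := a) (b := b) (c := c) rfl
  have h₂ := h 2 le_rfl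
  have h₁ := h 1 one_le_two
  have h₀ := h 0 zero_le_two
  have hdegG : G.natDegree = q.natDegree + s.natDegree := by
    rw [eq_sub_of_add_eq hqs.symm, ← Polynomial.C_1, Polynomial.natDegree_sub_C,
      Polynomial.natDegree_mul (Polynomial.ne_zero_of_natDegree_gt hq) hs]
  have hG0 : G ^ 2 ≠ 0 := pow_ne_zero 2 (Polynomial.ne_zero_of_natDegree_gt (n := 0) (by omega))
  have hdegG2 : (G ^ 2).natDegree = 2 * (q.natDegree + s.natDegree) := by
    rw [Polynomial.natDegree_pow, hdegG]
  refine ⟨mem_degreeLT_of_natDegree_mul_le hG0 (N := N + 2 + 2 * s.natDegree) ?_ (by omega),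
    mem_degreeLT_of_natDegree_mul_le hG0 (N := N + 1 + q.natDegree + s.natDegree) ?_ (by omega),
    mem_degreeLT_of_natDegree_mul_le hG0 (N := N + 2 * q.natDegree) ?_ (by omega)⟩
  · rw [ha]
    compute_degree
    omega
  · rw [hb]
    compute_degree
    omega
  · rw [hc]
    compute_degree
    omega

end QuadraticForms

section Dehomogenization

/-- Dehomogenization `F ↦ F(1, t, z)`, as a polynomial in `z` over `R[t]`. -/
noncomputable def dehom {R : Type*} [CommSemiring R] : MvPolynomial (Fin 3) R →ₐ[R] R[X][X] :=
  aeval ![1, Polynomial.C Polynomial.X, Polynomial.X]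

section CommSemiring

variable {R : Type*} [CommSemiring R]

lemma dehom_monomial (s : Fin 3 →₀ ℕ) (a : R) :
    dehom (monomial s a) = Polynomial.monomial (s 2) (Polynomial.monomial (s 1) a) := by
  simp [dehom, aeval_monomial, Finsupp.prod_fintype, Fin.prod_univ_three,
    ← Polynomial.C_mul_X_pow_eq_monomial, Polynomial.algebraMap_apply, mul_assoc]

lemma coeff_coeff_dehom (F : MvPolynomial (Fin 3) R) (j k : ℕ) :
    ((dehom F).coeff k).coeff j =
      ∑ s ∈ F.support, if s 1 = j ∧ s 2 = k then coeff s F else 0 := by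
  conv_lhs => rw [F.as_sum, map_sum, Polynomial.finsetSum_coeff, Polynomial.finsetSum_coeff]
  refine Finset.sum_congr rfl fun s _ => ?_
  rw [dehom_monomial, Polynomial.coeff_monomial]
  split_ifs <;> simp_all [Polynomial.coeff_monomial]

lemma exists_coeff_ne_zero_of_coeff_coeff_dehom_ne_zero {F : MvPolynomial (Fin 3) R} {j k : ℕ}
    (h : ((dehom F).coeff k).coeff j ≠ 0) : ∃ s, coeff s F ≠ 0 ∧ s 1 = j ∧ s 2 = k := by
  rw [coeff_coeff_dehom] at h
  obtain ⟨s, hs, hne⟩ := Finset.exists_ne_zero_of_sum_ne_zero h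
  exact ⟨s, mem_support_iff.1 hs, of_not_not fun hjk => hne (if_neg hjk)⟩

lemma natDegree_coeff_dehom_le {d : ℕ} {F : MvPolynomial (Fin 3) R} (hF : F.IsHomogeneous d)
    (k : ℕ) : ((dehom F).coeff k).natDegree ≤ d - k := by
  refine Polynomial.natDegree_le_iff_coeff_eq_zero.2 fun j hj => by_contra fun hne => ?_
  obtain ⟨s, hs, rfl, rfl⟩ := exists_coeff_ne_zero_of_coeff_coeff_dehom_ne_zero hne
  have hsd := not_imp_comm.1 hF.coeff_eq_zero hs
  rw [Finsupp.degree_eq_sum, Fin.sum_univ_three] at hsd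
  omega

lemma eq_zero_of_dehom_eq_zero {d : ℕ} {F : MvPolynomial (Fin 3) R} (hF : F.IsHomogeneous d)
    (h : dehom F = 0) : F = 0 := by
  have hdeg {s : Fin 3 →₀ ℕ} (hs : coeff s F ≠ 0) : s 0 + s 1 + s 2 = d := by
    rw [← not_imp_comm.1 hF.coeff_eq_zero hs, Finsupp.degree_eq_sum, Fin.sum_univ_three]
  ext s
  by_contra hs
  refine hs ?_
  have hcoeff : ((dehom F).coeff (s 2)).coeff (s 1) = 0 := by simp [h]
  rw [coeff_coeff_dehom, Finset.sum_eq_single s, if_pos ⟨rfl, rfl⟩] at hcoeff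
  · simpa using hcoeff
  · refine fun t ht hts => if_neg fun ⟨h₁, h₂⟩ => hts (Finsupp.ext fun i => ?_)
    have := hdeg (mem_support_iff.1 ht)
    have := hdeg hs
    fin_cases i <;> simp <;> omega
  · exact fun h => absurd (mem_support_iff.2 hs) h

lemma iterate_derivative_dehom (F : MvPolynomial (Fin 3) R) (j : ℕ) :
    Polynomial.derivative^[j] (dehom F) = dehom ((pderiv 2)^[j] F) := by
  have hsemiconj : Function.Semiconj dehom (pderiv (R := R) (2 : Fin 3)) Polynomial.derivative := by
    intro F
    induction F using MvPolynomial.induction_on with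
    | C a => simp [dehom, Polynomial.algebraMap_apply]
    | add F G hF hG => simp only [map_add, hF, hG]
    | mul_X F i hF =>
      have hX : dehom (pderiv 2 (X i : MvPolynomial _ R)) =
          Polynomial.derivative (dehom (X i)) := by
        fin_cases i <;> simp [dehom, pderiv_X]
      simp only [map_mul, map_add, pderiv_mul, Polynomial.derivative_mul, hF, hX]
  exact ((hsemiconj.iterate_right j) F).symm

lemma eval_dehom (q : R[X]) (F : MvPolynomial (Fin 3) R) :
    (dehom F).eval q = aeval ![1, Polynomial.X, q] F := by
  rw [← Polynomial.coe_aeval_eq_eval, dehom]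
  refine (comp_aeval_apply _ ((Polynomial.aeval q).restrictScalars R) F).trans ?_
  congr 2
  ext i
  fin_cases i <;> simp

end CommSemiring

lemma natDegree_dehom_le_of_mem_vanishing {R : Type*} [CommSemiring R] [NoZeroDivisors R]
    [CharZero R] {d r : ℕ} {F : MvPolynomial (Fin 3) R} (hF : F.IsHomogeneous d)
    (hv : F ∈ vanishing ![0, 0, 1] (d - r)) : (dehom F).natDegree ≤ r := by
  have hpoint : (![0, 0, 1] : Fin 3 → R) = Pi.single 2 1 := by
    ext i
    fin_cases i <;> rfl
  rw [hpoint] at hv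
  refine Polynomial.natDegree_le_iff_coeff_eq_zero.2 fun k hk => ?_
  ext j
  by_contra hne
  obtain ⟨s, hs, -, rfl⟩ := exists_coeff_ne_zero_of_coeff_coeff_dehom_ne_zero hne
  exact hs (coeff_eq_zero_of_mem_vanishing_single hF hv (by omega))

lemma X_sub_C_pow_dvd_eval_iterate_derivative_dehom {K : Type*} [Field K] [CharZero K] {t : K}
    {q : K[X]} {m : ℕ} {F : MvPolynomial (Fin 3) K} (hF : F ∈ vanishing ![1, t, q.eval t] m)
    (j : ℕ) : (Polynomial.X - Polynomial.C t) ^ (m - j) ∣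
      (Polynomial.derivative^[j] (dehom F)).eval q := by
  rw [iterate_derivative_dehom, eval_dehom]
  refine X_sub_C_pow_dvd_aeval_of_mem_vanishing ?_
  convert iterate_pderiv_mem_vanishing hF 2 j using 2
  ext i
  fin_cases i <;> simp

end Dehomogenization

section SpecialConfiguration

/-- The configuration `p₀ = (0 : 0 : 1)`, `pᵢ = (1 : tᵢ : q(tᵢ))` of points on the curve
`z = q(t)` together with the point at infinity of the lines `t = tᵢ`. -/
noncomputable def curveConfiguration {n : ℕ} (t : Fin n → ℂ) (q : ℂ[X]) :
    Fin (n + 1) → Fin 3 → ℂ :=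
  Fin.cons ![0, 0, 1] fun i => ![1, t i, q.eval (t i)]

variable {n d k : ℕ} {t : Fin n → ℂ} {q s G : ℂ[X]}

lemma exists_dehom_eq_smul_quadraticForm (ht : Function.Injective t)
    (hG : ∏ i, (Polynomial.X - Polynomial.C (t i)) = G) (hqs : q * s = G + 1)
    {F : MvPolynomial (Fin 3) ℂ}
    (hF : F ∈ linSys (curveConfiguration t q) d (quasiHom n (d - 2) (k + 2))) :
    ∃ v, dehom F = G ^ k • quadraticForm q s v := by
  obtain ⟨hFh, hFv⟩ := mem_linSys_iff.1 hF
  refine exists_eq_smul_quadraticForm hqs (natDegree_dehom_le_of_mem_vanishing hFh (hFv 0))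
    fun j _ => dvd_coeff_taylor_of_dvd_eval_iterate_derivative ?_
  rw [← hG]
  exact prod_X_sub_C_pow_dvd ht fun i =>
    X_sub_C_pow_dvd_eval_iterate_derivative_dehom (hFv i.succ) j

lemma natDegree_coeff_le_of_dehom_eq_smul (hd : n * k + 2 ≤ d) (hG : G.natDegree = n)
    (hG0 : G ≠ 0) {F : MvPolynomial (Fin 3) ℂ} (hF : F.IsHomogeneous d) {f : ℂ[X][X]}
    (h : dehom F = G ^ k • f) {j : ℕ} (hj : j ≤ 2) :
    (f.coeff j).natDegree ≤ d - (n * k + 2) + 2 - j := by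
  have hdeg := natDegree_coeff_dehom_le hF j
  rw [h, Polynomial.coeff_smul, smul_eq_mul] at hdeg
  rcases eq_or_ne (f.coeff j) 0 with h0 | h0
  · simp [h0]
  · rw [Polynomial.natDegree_mul (pow_ne_zero k hG0) h0, Polynomial.natDegree_pow, hG,
      mul_comm k] at hdeg
    omega

lemma finrank_linSys_curveConfiguration_le (hd : n * k + 2 ≤ d) (ht : Function.Injective t)
    (hG : ∏ i, (Polynomial.X - Polynomial.C (t i)) = q * s - 1) (hq : 0 < q.natDegree)
    (hs : s ≠ 0) :
    Module.finrank ℂ (linSys (curveConfiguration t q) d (quasiHom n (d - 2) (k + 2))) ≤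
      (d - (n * k + 2) + 3 - 2 * q.natDegree) + ((d - (n * k + 2) + 2 - n) +
        (d - (n * k + 2) + 1 - 2 * s.natDegree)) := by
  set N := d - (n * k + 2)
  set V := linSys (curveConfiguration t q) d (quasiHom n (d - 2) (k + 2))
  have hGn : (q * s - 1).natDegree = n := by
    rw [← hG, Polynomial.natDegree_prod_of_monic _ _ fun i _ => Polynomial.monic_X_sub_C _]
    simp
  have hG0 : q * s - 1 ≠ 0 := hG ▸ (Polynomial.monic_prod_X_sub_C t _).ne_zero
  have hn : q.natDegree + s.natDegree = n := by
    rw [← hGn, ← Polynomial.C_1, Polynomial.natDegree_sub_C,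
      Polynomial.natDegree_mul (Polynomial.ne_zero_of_natDegree_gt hq) hs]
  let W := Polynomial.degreeLT ℂ (N + 3 - 2 * q.natDegree) ×
    Polynomial.degreeLT ℂ (N + 2 - n) × Polynomial.degreeLT ℂ (N + 1 - 2 * s.natDegree)
  let Ψ : W →ₗ[ℂ] ℂ[X][X] := ((q * s - 1) ^ k • quadraticForm q s).restrictScalars ℂ ∘ₗ
    (Submodule.subtype _).prodMap ((Submodule.subtype _).prodMap (Submodule.subtype _))
  have hmem (F : V) : dehom F.1 ∈ LinearMap.range Ψ := by
    obtain ⟨⟨a, b, c⟩, hv⟩ := exists_dehom_eq_smul_quadraticForm ht hG (sub_add_cancel _ _).symm F.2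
    obtain ⟨ha, hb, hc⟩ := mem_degreeLT_of_natDegree_coeff_quadraticForm_le
      (sub_add_cancel _ _).symm hq hs fun j hj =>
        natDegree_coeff_le_of_dehom_eq_smul hd hGn hG0 (mem_linSys_iff.1 F.2).1 hv hj
    exact ⟨(⟨a, ha⟩, ⟨b, hn ▸ hb⟩, ⟨c, hc⟩), hv.symm⟩
  have hinj : Function.Injective
      ((dehom.toLinearMap ∘ₗ V.subtype).codRestrict (LinearMap.range Ψ) hmem) :=
    (injective_iff_map_eq_zero _).2 fun F hF => Subtype.ext
      (eq_zero_of_dehom_eq_zero (mem_linSys_iff.1 F.2).1 (congrArg Subtype.val hF))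
  calc
    Module.finrank ℂ V ≤ Module.finrank ℂ (LinearMap.range Ψ) :=
      LinearMap.finrank_le_finrank_of_injective hinj
    _ ≤ Module.finrank ℂ W := LinearMap.finrank_range_le Ψ
    _ = _ := by simp only [W, Module.finrank_prod, finrank_degreeLT]

lemma exists_finrank_linSys_quasiHom_le (hn : 1 ≤ n) (hd : (k + 1) * n + 1 ≤ d) :
    ∃ p : Fin (n + 1) → Fin 3 → ℂ,
      Module.finrank ℂ (linSys p d (quasiHom n (d - 2) (k + 2))) ≤ 3 * d - 3 * (k + 1) * n := by
  have hζ := Complex.isPrimitiveRoot_exp n (by omega)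
  set ζ := Complex.exp (2 * Real.pi * Complex.I / n)
  have hinj : Function.Injective fun i : Fin n => ζ ^ (i : ℕ) := fun i j h =>
    Fin.ext (hζ.pow_inj i.2 j.2 h)
  have hprod : ∏ i : Fin n, (Polynomial.X - Polynomial.C (ζ ^ (i : ℕ))) =
      Polynomial.X ^ ((n + 1) / 2) * Polynomial.X ^ (n / 2) - 1 := by
    rw [← pow_add, show (n + 1) / 2 + n / 2 = n by omega]
    simpa [Finset.prod_range] using (X_pow_sub_C_eq_prod hζ hn (one_pow n)).symm
  have hkn : (k + 1) * n = n * k + n := by ring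
  have hle := finrank_linSys_curveConfiguration_le (d := d) (k := k) (by omega) hinj hprod
    (by rw [Polynomial.natDegree_X_pow]; omega) (pow_ne_zero _ Polynomial.X_ne_zero)
  refine ⟨_, hle.trans ?_⟩
  rw [Polynomial.natDegree_X_pow, Polynomial.natDegree_X_pow, mul_assoc, hkn]
  omega

end SpecialConfiguration

section Dimension

lemma virtDim_quasiHom {d : ℕ} (hd : 2 ≤ d) (n m : ℕ) :
    virtDim d (quasiHom n (d - 2) m) = 3 * (d : ℤ) - (m * (m + 1) / 2 : ℤ) * n - 1 := by
  obtain ⟨c, rfl⟩ := Nat.exists_eq_add_of_le' hd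
  have h : ((c + 2 : ℕ) : ℤ) * ((c + 2 : ℕ) + 3) = c * (c + 1) + (3 * c + 5) * 2 := by
    push_cast
    ring
  rw [virtDim, h, Int.add_mul_ediv_right _ _ two_ne_zero, Fin.sum_univ_succ]
  simp only [quasiHom_zero, quasiHom_succ, Finset.sum_const, Finset.card_univ, Fintype.card_fin,
    nsmul_eq_mul, Nat.add_sub_cancel]
  push_cast
  ring

lemma generically_projDim_quasiHom {d n k : ℕ} (hn : 1 ≤ n) (hd : (k + 1) * n + 1 ≤ d) :
    Generically (n + 1) fun p =>
      projDim p d (quasiHom n (d - 2) (k + 2)) = 3 * (d : ℤ) - 3 * (k + 1) * n - 1 := by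
  obtain ⟨q, hq⟩ := exists_finrank_linSys_quasiHom_le hn hd
  refine (generically_finrank_linSys_le d (quasiHom n (d - 2) (k + 2)) q).mono fun p hp => ?_
  have hkn : (k + 1) * n = n * k + n := by ring
  have hfinrank := (hp.trans hq).antisymm (le_finrank_linSys_quasiHom (by omega) p)
  rw [projDim, hfinrank, Nat.cast_sub (by rw [mul_assoc]; omega)]
  push_cast
  rfl

lemma three_mul_sub_one_lt {m : ℤ} (hm : 4 ≤ m) : 3 * (m - 1) < m * (m + 1) / 2 := by
  rw [Int.lt_iff_add_one_le, Int.le_ediv_iff_mul_le two_pos]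
  nlinarith

end Dimension

theorem special_L_d_dsub2_sixn_general (d n m : ℕ) (hm : 4 ≤ m) (hn : 1 ≤ n)
    (hd : (m - 1) * n + 1 ≤ d) :
    virtDim d (quasiHom n (d - 2) m) = 3 * (d : ℤ) - (m * (m + 1) / 2 : ℤ) * n - 1 ∧
    Generically (n + 1) (fun p =>
      projDim p d (quasiHom n (d - 2) m) = 3 * (d : ℤ) - 3 * (m - 1) * n - 1 ∧
      projDim p d (quasiHom n (d - 2) m) >
        max (-1) (virtDim d (quasiHom n (d - 2) m))) := by
  obtain ⟨k, rfl⟩ : ∃ k, m = k + 2 := Nat.exists_eq_add_of_le' (by omega)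
  have hkn : (k + 1) * n + 1 ≤ d := hd
  have hvirt := virtDim_quasiHom (d := d) (by nlinarith) n (k + 2)
  refine ⟨hvirt, (generically_projDim_quasiHom hn hkn).mono fun p hdim => ?_⟩
  rw [hdim, hvirt]
  have hlt := three_mul_sub_one_lt (m := (k + 2 : ℕ)) (by omega)
  zify at hn hkn
  push_cast at hlt ⊢
  refine ⟨by ring, max_lt (by linarith) ?_⟩
  nlinarith

lemma qh_eq_quasiHom (n m₀ : ℕ) : qh n m₀ = quasiHom n m₀ 6 := rfl

theorem special_L_d_dsub2_sixn (d n : ℕ) (hn : 1 ≤ n) (hd : 15 * n + 1 ≤ 3 * d) :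
    virtDim d (qh n (d - 2)) = 3 * (d : ℤ) - 21 * n - 1 ∧
    Generically (n + 1) (fun p =>
      projDim p d (qh n (d - 2)) = 3 * (d : ℤ) - 15 * n - 1 ∧
      projDim p d (qh n (d - 2)) > max (-1) (virtDim d (qh n (d - 2)))) := by
  simpa [qh_eq_quasiHom] using
    special_L_d_dsub2_sixn_general d n 6 (by norm_num) hn (by omega)
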